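/- arXiv:1803.09616 — 3 statements merged into one kernel-verified Lean document; each statement's English description precedes it below -/
import Mathlib

section
/- Let Ω_o be the two-dimensional overlap region under the graph of ζ. Then for every function φ that is C¹ on a neighborhood of the closure of Ω_o, the divergence-theorem identity ∫_{Ω_o} φ(x,y)² d(x,y) + ∫_{Ω_o} 2 y φ(x,y) ∂_yφ(x,y) d(x,y) = ∫_0^{x_M} ζ(x) φ(x,ζ(x))² dx holds (this is the identity obtained by applying the divergence theorem to the vector field v = (0, y φ²) on Ω_o; the flux through the bottom and lateral faces vanishes). -/
/-!
On each vertical segment `{x} × [0, ζ x]` the integrand `φ² + 2 y φ ∂_yφ` is the `y`-derivative of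
`y φ²`, so the fundamental theorem of calculus gives `ζ x * φ (x, ζ x) ^ 2` for its integral; the
term at `y = 0` vanishes. Fubini's theorem then yields the identity. It applies because the region
is open and bounded and both integrands agree on it with functions continuous on its compact
closure, `∂_yφ` being replaced by `fderiv ℝ φ p (0, 1)`.
-/

open MeasureTheory Set

/-- Partial derivative of `φ : ℝ × ℝ → ℝ` with respect to the second variable. -/
noncomputable def pdy (φ : ℝ × ℝ → ℝ) (p : ℝ × ℝ) : ℝ :=
  deriv (fun t => φ (p.1, t)) p.2

/-- The two-dimensional overlap region under the graph of `ζ`. -/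
def ovl (xM : ℝ) (ζ : ℝ → ℝ) : Set (ℝ × ℝ) :=
  {p : ℝ × ℝ | 0 < p.1 ∧ p.1 < xM ∧ 0 < p.2 ∧ p.2 < ζ p.1}

lemma isOpen_ovl {xM : ℝ} {ζ : ℝ → ℝ} (hζc : ContinuousOn ζ (Icc 0 xM)) :
    IsOpen (ovl xM ζ) := by
  have hc : ContinuousOn (fun p : ℝ × ℝ => (p.2, ζ p.1 - p.2)) (Ioo 0 xM ×ˢ univ) := by
    have h1 : ContinuousOn (fun p : ℝ × ℝ => ζ p.1) (Ioo 0 xM ×ˢ univ) :=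
      hζc.comp continuous_fst.continuousOn fun p hp => Ioo_subset_Icc_self hp.1
    exact continuous_snd.continuousOn.prodMk (h1.sub continuous_snd.continuousOn)
  have ho := hc.isOpen_inter_preimage (isOpen_Ioo.prod isOpen_univ)
    ((isOpen_Ioi (a := (0 : ℝ))).prod (isOpen_Ioi (a := (0 : ℝ))))
  convert ho using 1
  ext p
  simp [ovl, and_assoc]

lemma isCompact_closure_ovl {xM dO : ℝ} {ζ : ℝ → ℝ}
    (hζ : ∀ x ∈ Icc 0 xM, 0 < ζ x ∧ ζ x ≤ dO) : IsCompact (closure (ovl xM ζ)) := by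
  refine (isCompact_Icc (a := (0 : ℝ)) (b := xM)).prod (isCompact_Icc (a := (0 : ℝ)) (b := dO))
    |>.closure_of_subset ?_
  rintro p ⟨h1, h2, h3, h4⟩
  exact ⟨⟨h1.le, h2.le⟩, h3.le, h4.le.trans (hζ p.1 ⟨h1.le, h2.le⟩).2⟩

/-- Closed vertical segments, end points included, lie in the closure of the region. -/
lemma segment_mem_closure_ovl {xM : ℝ} {ζ : ℝ → ℝ} {x y : ℝ} (hx : x ∈ Ioo 0 xM)
    (hz : 0 < ζ x) (hy : y ∈ Icc 0 (ζ x)) : (x, y) ∈ closure (ovl xM ζ) := by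
  have hm : MapsTo (fun t : ℝ => (x, t)) (Ioo 0 (ζ x)) (ovl xM ζ) :=
    fun t ht => ⟨hx.1, hx.2, ht.1, ht.2⟩
  refine hm.closure (by fun_prop) ?_
  rwa [closure_Ioo hz.ne]

lemma hasDerivAt_vertical {U : Set (ℝ × ℝ)} (hU : IsOpen U) {φ : ℝ × ℝ → ℝ}
    (hφ : ContDiffOn ℝ 1 φ U) {p : ℝ × ℝ} (hp : p ∈ U) :
    HasDerivAt (fun t => φ (p.1, t)) (fderiv ℝ φ p (0, 1)) p.2 := by
  have hd : HasFDerivAt φ (fderiv ℝ φ p) (p.1, p.2) :=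
    ((hφ.contDiffAt (hU.mem_nhds hp)).differentiableAt one_ne_zero).hasFDerivAt
  exact hd.comp_hasDerivAt p.2 ((hasDerivAt_const p.2 p.1).prodMk (hasDerivAt_id p.2))

/-- The divergence-theorem identity obtained by applying the
divergence theorem to the vector field `v = (0, y φ²)` on the overlap region `Ω_o`:
`∫_{Ω_o} φ² + ∫_{Ω_o} 2 y φ ∂_yφ = ∫_0^{x_M} ζ(x) φ(x,ζ(x))² dx`. -/
theorem divergence_identity_overlap
    (xM dO : ℝ) (hxM : 0 < xM) (hdO : 0 < dO)
    (ζ : ℝ → ℝ) (hζc : ContinuousOn ζ (Icc 0 xM))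
    (hζ : ∀ x ∈ Icc 0 xM, 0 < ζ x ∧ ζ x ≤ dO)
    (U : Set (ℝ × ℝ)) (hU : IsOpen U) (hclU : closure (ovl xM ζ) ⊆ U)
    (φ : ℝ × ℝ → ℝ) (hφ : ContDiffOn ℝ 1 φ U) :
    (∫ p in ovl xM ζ, (φ p) ^ 2) +
      (∫ p in ovl xM ζ, 2 * p.2 * φ p * pdy φ p) =
    ∫ x in Ioo (0 : ℝ) xM, ζ x * (φ (x, ζ x)) ^ 2 := by
  have hmeas : MeasurableSet (ovl xM ζ) := (isOpen_ovl hζc).measurableSet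
  have hK := isCompact_closure_ovl hζ
  have hφc : ContinuousOn φ U := hφ.continuousOn
  have hdc : ContinuousOn (fun p => fderiv ℝ φ p (0, 1)) U :=
    (hφ.continuousOn_fderiv_of_isOpen hU le_rfl).clm_apply continuousOn_const
  have h1c : ContinuousOn (fun p => φ p ^ 2) U := hφc.pow 2
  have h2c : ContinuousOn (fun p : ℝ × ℝ => 2 * p.2 * φ p * fderiv ℝ φ p (0, 1)) U :=
    ((by fun_prop : ContinuousOn (fun p : ℝ × ℝ => 2 * p.2) U).mul hφc).mul hdc
  have h1i : IntegrableOn (fun p => φ p ^ 2) (ovl xM ζ) :=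
    ((h1c.mono hclU).integrableOn_compact hK).mono_set subset_closure
  have h2i : IntegrableOn (fun p : ℝ × ℝ => 2 * p.2 * φ p * fderiv ℝ φ p (0, 1)) (ovl xM ζ) :=
    ((h2c.mono hclU).integrableOn_compact hK).mono_set subset_closure
  have hpdy : (∫ p in ovl xM ζ, 2 * p.2 * φ p * pdy φ p) =
      ∫ p in ovl xM ζ, 2 * p.2 * φ p * fderiv ℝ φ p (0, 1) := by
    refine setIntegral_congr_fun hmeas fun p hp => ?_
    simp only [pdy, (hasDerivAt_vertical hU hφ (hclU (subset_closure hp))).deriv]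
  rw [hpdy, ← integral_add h1i h2i]
  set g : ℝ × ℝ → ℝ := fun p => φ p ^ 2 + 2 * p.2 * φ p * fderiv ℝ φ p (0, 1) with hg
  have hgc : ContinuousOn g U := h1c.add h2c
  have hgi : Integrable ((ovl xM ζ).indicator g) (volume.prod volume) :=
    (integrable_indicator_iff hmeas).2 (h1i.add h2i)
  rw [← integral_indicator hmeas, Measure.volume_eq_prod, integral_prod _ hgi,
    ← integral_indicator measurableSet_Ioo]
  congr 1
  ext x
  by_cases hx : x ∈ Ioo 0 xM
  · have hz := (hζ x (Ioo_subset_Icc_self hx)).1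
    have hseg : ∀ y ∈ uIcc 0 (ζ x), (x, y) ∈ U := fun y hy =>
      hclU (segment_mem_closure_ovl hx hz (by rwa [uIcc_of_le hz.le] at hy))
    have hslice : (fun y => (ovl xM ζ).indicator g (x, y)) =
        (Ioo 0 (ζ x)).indicator fun y => g (x, y) := by
      ext y
      simp only [indicator, ovl, mem_ofPred_eq, mem_Ioo, hx.1, hx.2, true_and]
    rw [hslice, integral_indicator measurableSet_Ioo, indicator_of_mem hx,
      ← integral_Ioc_eq_integral_Ioo, ← intervalIntegral.integral_of_le hz.le]
    have hftc := intervalIntegral.integral_eq_sub_of_hasDerivAt (a := 0) (b := ζ x)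
      (f := fun y => y * φ (x, y) ^ 2) (f' := fun y => g (x, y)) (fun y hy => by
        have hd := (hasDerivAt_id y).mul ((hasDerivAt_vertical hU hφ (hseg y hy)).pow 2)
        refine hd.congr_deriv ?_
        simp [hg]
        ring)
      (hgc.comp (by fun_prop) hseg).intervalIntegrable
    rw [hftc]
    simp
  · have hslice : (fun y => (ovl xM ζ).indicator g (x, y)) = fun _ => 0 := by
      ext y
      exact indicator_of_notMem (fun h => hx ⟨h.1, h.2.1⟩) _
    rw [hslice, indicator_of_notMem hx, integral_zero]
end

section
/- (Poincaré-type inequality on a thin overlap region, three-dimensional version.) There exists a constant c > 0, independent of φ, ζ, x_M, y_M, d_o and h, such that for every x_M, y_M > 0, every h > 0, every d_o with 0 < d_o ≤ h, every continuous ζ: [0, x_M] × [0, y_M] → ℝ with 0 < ζ(x,y) ≤ d_o, and every function φ that is C¹ on a neighborhood of the closure of Ω_o = {(x,y,z) ∈ ℝ³ : 0 < x < x_M, 0 < y < y_M, 0 < z < ζ(x,y)}, one has ∫_{Ω_o} φ² ≤ c · d_o · h · ( ∫_{Ω_o} |∇φ|² + (1/h) ∫_0^{y_M} ∫_0^{x_M}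 φ(x,y,ζ(x,y))² dx dy ). -/
/-!
The inequality holds with `c = 4`. On a vertical segment `0 ≤ z ≤ L`, integrating
`(z g²)' = g² + 2 z g g' ≥ g² / 2 - 2 L² g'²` gives
`∫ g² ≤ 2 L g(L)² + 4 L² ∫ g'²` (`segment_ineq`). Applying this to `g = φ(x, y, ·)` with
`L = ζ(x, y) ≤ d_o`, integrating over `(x, y)` by Fubini (`ovl3_fubini`), and using
`|∂φ/∂z|² ≤ |∇φ|²` and `d_o ≤ h` gives the claim. All integrals converge because the closure of
the overlap region is compact and `φ` is `C¹` near it.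
-/

open MeasureTheory Set

/-- Partial derivative of `φ : ℝ × ℝ × ℝ → ℝ` with respect to the first variable. -/
noncomputable def pd3x (φ : ℝ × ℝ × ℝ → ℝ) (p : ℝ × ℝ × ℝ) : ℝ :=
  deriv (fun t => φ (t, p.2.1, p.2.2)) p.1

/-- Partial derivative of `φ : ℝ × ℝ × ℝ → ℝ` with respect to the second variable. -/
noncomputable def pd3y (φ : ℝ × ℝ × ℝ → ℝ) (p : ℝ × ℝ × ℝ) : ℝ :=
  deriv (fun t => φ (p.1, t, p.2.2)) p.2.1

/-- Partial derivative of `φ : ℝ × ℝ × ℝ → ℝ` with respect to the third variable. -/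
noncomputable def pd3z (φ : ℝ × ℝ × ℝ → ℝ) (p : ℝ × ℝ × ℝ) : ℝ :=
  deriv (fun t => φ (p.1, p.2.1, t)) p.2.2

/-- Squared Euclidean norm of the gradient of `φ : ℝ × ℝ × ℝ → ℝ`. -/
noncomputable def gradSq3 (φ : ℝ × ℝ × ℝ → ℝ) (p : ℝ × ℝ × ℝ) : ℝ :=
  (pd3x φ p) ^ 2 + (pd3y φ p) ^ 2 + (pd3z φ p) ^ 2

/-- The three-dimensional overlap region under the graph of `ζ`. -/
def ovl3 (xM yM : ℝ) (ζ : ℝ × ℝ → ℝ) : Set (ℝ × ℝ × ℝ) :=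
  {p : ℝ × ℝ × ℝ | 0 < p.1 ∧ p.1 < xM ∧ 0 < p.2.1 ∧ p.2.1 < yM ∧
    0 < p.2.2 ∧ p.2.2 < ζ (p.1, p.2.1)}

/-- One-dimensional Poincaré inequality with control of the value at the right endpoint. -/
lemma segment_ineq {L : ℝ} (hL : 0 < L) {g g' : ℝ → ℝ}
    (hg : ∀ z ∈ Icc 0 L, HasDerivAt g (g' z) z) (hg' : ContinuousOn g' (Icc 0 L)) :
    ∫ z in Ioo 0 L, g z ^ 2 ≤ 2 * L * g L ^ 2 + 4 * L ^ 2 * ∫ z in Ioo 0 L, g' z ^ 2 := by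
  have hgc : ContinuousOn g (Icc 0 L) := fun z hz => (hg z hz).continuousAt.continuousWithinAt
  have hu : uIcc 0 L = Icc 0 L := uIcc_of_le hL.le
  have e : ∀ f : ℝ → ℝ, ∫ z in Ioo 0 L, f z = ∫ z in (0 : ℝ)..L, f z := fun f => by
    rw [intervalIntegral.integral_of_le hL.le, integral_Ioc_eq_integral_Ioo]
  rw [e, e]
  have i1 : IntervalIntegrable (fun z => g z ^ 2) volume 0 L :=
    ContinuousOn.intervalIntegrable (by rw [hu]; fun_prop)
  have i2 : IntervalIntegrable (fun z => g' z ^ 2) volume 0 L :=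
    ContinuousOn.intervalIntegrable (by rw [hu]; fun_prop)
  have i3 : IntervalIntegrable (fun z => g z ^ 2 + 2 * z * g z * g' z) volume 0 L :=
    ContinuousOn.intervalIntegrable (by rw [hu]; fun_prop)
  have ftc : ∫ z in (0 : ℝ)..L, (g z ^ 2 + 2 * z * g z * g' z) = L * g L ^ 2 := by
    rw [intervalIntegral.integral_eq_sub_of_hasDerivAt (f := fun z => z * g z ^ 2) _ i3]
    · simp
    · intro z hz
      rw [hu] at hz
      refine ((hasDerivAt_id' z).fun_mul ((hg z hz).fun_pow 2)).congr_deriv ?_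
      push_cast
      ring
  have mono : ∫ z in (0 : ℝ)..L, ((1 / 2) * g z ^ 2 - 2 * L ^ 2 * g' z ^ 2) ≤
      ∫ z in (0 : ℝ)..L, (g z ^ 2 + 2 * z * g z * g' z) := by
    refine intervalIntegral.integral_mono_on hL.le
      ((i1.const_mul _).sub (i2.const_mul _)) i3 fun z hz => ?_
    have h1 : z ^ 2 * g' z ^ 2 ≤ L ^ 2 * g' z ^ 2 :=
      mul_le_mul_of_nonneg_right (pow_le_pow_left₀ hz.1 hz.2 2) (sq_nonneg _)
    nlinarith [sq_nonneg (g z + 2 * z * g' z)]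
  rw [intervalIntegral.integral_sub (i1.const_mul _) (i2.const_mul _),
    intervalIntegral.integral_const_mul, intervalIntegral.integral_const_mul, ftc] at mono
  linarith

lemma isOpen_ovl3 {xM yM : ℝ} {ζ : ℝ × ℝ → ℝ}
    (hζ : ContinuousOn ζ (Icc 0 xM ×ˢ Icc 0 yM)) : IsOpen (ovl3 xM yM ζ) := by
  have hV : IsOpen {p : ℝ × ℝ × ℝ | 0 < p.1 ∧ p.1 < xM ∧ 0 < p.2.1 ∧ p.2.1 < yM ∧ 0 < p.2.2} := by
    refine (isOpen_lt ?_ ?_).and ((isOpen_lt ?_ ?_).and ((isOpen_lt ?_ ?_).and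
      ((isOpen_lt ?_ ?_).and (isOpen_lt ?_ ?_)))) <;> fun_prop
  have hc : ContinuousOn (fun p : ℝ × ℝ × ℝ => ζ (p.1, p.2.1) - p.2.2)
      {p : ℝ × ℝ × ℝ | 0 < p.1 ∧ p.1 < xM ∧ 0 < p.2.1 ∧ p.2.1 < yM ∧ 0 < p.2.2} := by
    refine ContinuousOn.sub (hζ.comp (f := fun p : ℝ × ℝ × ℝ => (p.1, p.2.1)) (by fun_prop) ?_)
      (by fun_prop)
    rintro p ⟨h1, h2, h3, h4, -⟩
    exact ⟨⟨h1.le, h2.le⟩, ⟨h3.le, h4.le⟩⟩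
  have := hc.isOpen_inter_preimage hV isOpen_Ioi (t := Ioi 0)
  convert this using 1
  ext p
  simp [ovl3, and_assoc]

/-- Fubini's theorem for the overlap region, with the vertical variable integrated first. -/
lemma ovl3_fubini {xM yM : ℝ} {ζ : ℝ × ℝ → ℝ} (hm : MeasurableSet (ovl3 xM yM ζ))
    {f : ℝ × ℝ × ℝ → ℝ} (hf : IntegrableOn f (ovl3 xM yM ζ)) :
    IntegrableOn (fun q : ℝ × ℝ => ∫ z in Ioo 0 (ζ q), f (q.1, q.2, z))
        (Ioo (0 : ℝ) xM ×ˢ Ioo (0 : ℝ) yM) ∧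
      ∫ p in ovl3 xM yM ζ, f p =
        ∫ q in Ioo (0 : ℝ) xM ×ˢ Ioo (0 : ℝ) yM, ∫ z in Ioo 0 (ζ q), f (q.1, q.2, z) := by
  have hR : MeasurableSet (Ioo (0 : ℝ) xM ×ˢ Ioo (0 : ℝ) yM) :=
    measurableSet_Ioo.prod measurableSet_Ioo
  have mp : MeasurePreserving (MeasurableEquiv.prodAssoc : (ℝ × ℝ) × ℝ ≃ᵐ ℝ × ℝ × ℝ)
      volume volume := volume_preserving_prodAssoc
  set F := (ovl3 xM yM ζ).indicator f with hF
  have hFi : Integrable F := (integrable_indicator_iff hm).2 hf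
  have hFi' : Integrable (fun p : (ℝ × ℝ) × ℝ => F (MeasurableEquiv.prodAssoc p)) :=
    (mp.integrable_comp_emb (MeasurableEquiv.measurableEmbedding _)).2 hFi
  have key : (fun q : ℝ × ℝ => ∫ z, F (MeasurableEquiv.prodAssoc (q, z))) =
      (Ioo (0 : ℝ) xM ×ˢ Ioo (0 : ℝ) yM).indicator
        (fun q : ℝ × ℝ => ∫ z in Ioo 0 (ζ q), f (q.1, q.2, z)) := by
    funext q
    by_cases hq : q ∈ Ioo (0 : ℝ) xM ×ˢ Ioo (0 : ℝ) yM
    · rw [indicator_of_mem hq, ← integral_indicator measurableSet_Ioo]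
      congr 1
      funext z
      obtain ⟨⟨h1, h2⟩, h3, h4⟩ := hq
      by_cases hz : z ∈ Ioo 0 (ζ q)
      · rw [indicator_of_mem hz]
        exact indicator_of_mem (s := ovl3 xM yM ζ) ⟨h1, h2, h3, h4, hz.1, hz.2⟩ f
      · rw [indicator_of_notMem hz]
        exact indicator_of_notMem (s := ovl3 xM yM ζ)
          (fun h => hz ⟨h.2.2.2.2.1, h.2.2.2.2.2⟩) f
    · rw [indicator_of_notMem hq]
      have : ∀ z, F (MeasurableEquiv.prodAssoc (q, z)) = 0 := fun z =>
        indicator_of_notMem (s := ovl3 xM yM ζ)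
          (fun h => hq ⟨⟨h.1, h.2.1⟩, h.2.2.1, h.2.2.2.1⟩) f
      simp [this]
  have hi := hFi'.integral_prod_left
  rw [key, integrable_indicator_iff hR] at hi
  refine ⟨hi, ?_⟩
  rw [← integral_indicator hm, ← integral_indicator hR, ← key, ← mp.integral_comp
    (MeasurableEquiv.measurableEmbedding _)]
  exact integral_prod _ hFi'

/-- A `C¹` function has continuous partial derivatives, in the sense of `pd3x`, `pd3y`, `pd3z`. -/
lemma partials_continuousOn {U : Set (ℝ × ℝ × ℝ)} (hU : IsOpen U) {φ : ℝ × ℝ × ℝ → ℝ}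
    (hφ : ContDiffOn ℝ 1 φ U) :
    ContinuousOn (pd3x φ) U ∧ ContinuousOn (pd3y φ) U ∧ ContinuousOn (pd3z φ) U ∧
      ∀ p ∈ U, HasDerivAt (fun t => φ (p.1, p.2.1, t)) (pd3z φ p) p.2.2 := by
  have hc : ContinuousOn (fderiv ℝ φ) U := hφ.continuousOn_fderiv_of_isOpen hU le_rfl
  have hd : ∀ p ∈ U, HasFDerivAt φ (fderiv ℝ φ p) p := fun p hp =>
    ((hφ.differentiableOn one_ne_zero).differentiableAt (hU.mem_nhds hp)).hasFDerivAt
  have hx : ∀ p ∈ U, HasDerivAt (fun t => φ (t, p.2.1, p.2.2)) (fderiv ℝ φ p (1, 0, 0)) p.1 :=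
    fun p hp => HasFDerivAt.comp_hasDerivAt (f := fun t : ℝ => (t, p.2.1, p.2.2)) p.1 (hd p hp)
      ((hasDerivAt_id p.1).prodMk (hasDerivAt_const p.1 (p.2.1, p.2.2)))
  have hy : ∀ p ∈ U, HasDerivAt (fun t => φ (p.1, t, p.2.2)) (fderiv ℝ φ p (0, 1, 0)) p.2.1 :=
    fun p hp => HasFDerivAt.comp_hasDerivAt (f := fun t : ℝ => (p.1, t, p.2.2)) p.2.1 (hd p hp)
      ((hasDerivAt_const p.2.1 p.1).prodMk
        ((hasDerivAt_id p.2.1).prodMk (hasDerivAt_const p.2.1 p.2.2)))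
  have hz : ∀ p ∈ U, HasDerivAt (fun t => φ (p.1, p.2.1, t)) (fderiv ℝ φ p (0, 0, 1)) p.2.2 :=
    fun p hp => HasFDerivAt.comp_hasDerivAt (f := fun t : ℝ => (p.1, p.2.1, t)) p.2.2 (hd p hp)
      ((hasDerivAt_const p.2.2 p.1).prodMk
        ((hasDerivAt_const p.2.2 p.2.1).prodMk (hasDerivAt_id p.2.2)))
  refine ⟨?_, ?_, ?_, fun p hp => (hz p hp).differentiableAt.hasDerivAt⟩
  · exact (hc.clm_apply continuousOn_const).congr fun p hp => (hx p hp).deriv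
  · exact (hc.clm_apply continuousOn_const).congr fun p hp => (hy p hp).deriv
  · exact (hc.clm_apply continuousOn_const).congr fun p hp => (hz p hp).deriv

/-- Closed vertical segments over interior points of the base lie in the closure. -/
lemma segment_mem_closure {xM yM : ℝ} {ζ : ℝ × ℝ → ℝ} {q : ℝ × ℝ}
    (hq : q ∈ Ioo (0 : ℝ) xM ×ˢ Ioo (0 : ℝ) yM) (hpos : 0 < ζ q) {z : ℝ}
    (hz : z ∈ Icc 0 (ζ q)) : (q.1, q.2, z) ∈ closure (ovl3 xM yM ζ) := by
  rw [← closure_Ioo hpos.ne] at hz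
  refine map_mem_closure (f := fun t : ℝ => (q.1, q.2, t)) (by fun_prop) hz fun t ht => ?_
  obtain ⟨⟨h1, h2⟩, h3, h4⟩ := hq
  exact ⟨h1, h2, h3, h4, ht.1, ht.2⟩

/-- Poincaré-type inequality on a thin overlap region,
three-dimensional version. There is a universal constant `c > 0` such that
`∫_{Ω_o} φ² ≤ c d_o h ( ∫_{Ω_o} |∇φ|² + (1/h) ∫_0^{y_M}∫_0^{x_M} φ(x,y,ζ(x,y))² dx dy )`. -/
theorem poincare_thin_overlap_3d :
    ∃ c : ℝ, 0 < c ∧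
      ∀ (xM yM h dO : ℝ), 0 < xM → 0 < yM → 0 < h → 0 < dO → dO ≤ h →
      ∀ ζ : ℝ × ℝ → ℝ, ContinuousOn ζ (Icc 0 xM ×ˢ Icc 0 yM) →
        (∀ q ∈ Icc (0 : ℝ) xM ×ˢ Icc (0 : ℝ) yM, 0 < ζ q ∧ ζ q ≤ dO) →
      ∀ (U : Set (ℝ × ℝ × ℝ)), IsOpen U → closure (ovl3 xM yM ζ) ⊆ U →
      ∀ φ : ℝ × ℝ × ℝ → ℝ, ContDiffOn ℝ 1 φ U →
        (∫ p in ovl3 xM yM ζ, (φ p) ^ 2) ≤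
          c * dO * h * ((∫ p in ovl3 xM yM ζ, gradSq3 φ p) +
            (1 / h) * ∫ q in Ioo (0 : ℝ) xM ×ˢ Ioo (0 : ℝ) yM,
              (φ (q.1, q.2, ζ q)) ^ 2) := by
  refine ⟨4, by norm_num, ?_⟩
  intro xM yM h dO hx hy hh hd hdh ζ hζ hζb U hU hcU φ hφ
  set Ω := ovl3 xM yM ζ with hΩ
  set R := Ioo (0 : ℝ) xM ×ˢ Ioo (0 : ℝ) yM with hRdef
  have hRsub : R ⊆ Icc (0 : ℝ) xM ×ˢ Icc (0 : ℝ) yM :=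
    prod_mono Ioo_subset_Icc_self Ioo_subset_Icc_self
  have hR : MeasurableSet R := measurableSet_Ioo.prod measurableSet_Ioo
  have hm : MeasurableSet Ω := (isOpen_ovl3 hζ).measurableSet
  have hΩb : Ω ⊆ Icc (0 : ℝ) xM ×ˢ Icc (0 : ℝ) yM ×ˢ Icc (0 : ℝ) dO := by
    rintro p ⟨h1, h2, h3, h4, h5, h6⟩
    have hq : (p.1, p.2.1) ∈ Icc (0 : ℝ) xM ×ˢ Icc (0 : ℝ) yM := ⟨⟨h1.le, h2.le⟩, h3.le, h4.le⟩
    exact ⟨⟨h1.le, h2.le⟩, ⟨h3.le, h4.le⟩, h5.le, h6.le.trans (hζb _ hq).2⟩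
  have hK : IsCompact (closure Ω) :=
    (isCompact_Icc.prod (isCompact_Icc.prod isCompact_Icc)).closure_of_subset hΩb
  have hint : ∀ f : ℝ × ℝ × ℝ → ℝ, ContinuousOn f U → IntegrableOn f Ω := fun f hf =>
    ((hf.mono hcU).integrableOn_compact hK).mono_set subset_closure
  obtain ⟨cx, cy, cz, hz⟩ := partials_continuousOn hU hφ
  have cφ : ContinuousOn φ U := hφ.continuousOn
  have I1 : IntegrableOn (fun p => φ p ^ 2) Ω := hint _ (cφ.pow 2)
  have I2 : IntegrableOn (fun p => pd3z φ p ^ 2) Ω := hint _ (cz.pow 2)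
  have I3 : IntegrableOn (gradSq3 φ) Ω := hint _ (((cx.pow 2).add (cy.pow 2)).add (cz.pow 2))
  have htop : ∀ q ∈ R, (q.1, q.2, ζ q) ∈ closure Ω := fun q hq =>
    segment_mem_closure hq (hζb q (hRsub hq)).1 ⟨(hζb q (hRsub hq)).1.le, le_rfl⟩
  have I4 : IntegrableOn (fun q : ℝ × ℝ => φ (q.1, q.2, ζ q) ^ 2) R := by
    obtain ⟨C, hC⟩ := hK.exists_bound_of_continuousOn ((cφ.pow 2).mono hcU)
    have hζR : ContinuousOn ζ R := hζ.mono hRsub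
    have hcont : ContinuousOn (fun q : ℝ × ℝ => φ (q.1, q.2, ζ q) ^ 2) R :=
      (cφ.comp (f := fun q : ℝ × ℝ => (q.1, q.2, ζ q)) (by fun_prop)
        fun q hq => hcU (htop q hq)).pow 2
    refine IntegrableOn.of_bound ?_ (hcont.aestronglyMeasurable hR) C ?_
    · exact (measure_mono hRsub).trans_lt (isCompact_Icc.prod isCompact_Icc).measure_lt_top
    · exact (ae_restrict_iff' hR).2 (.of_forall fun q hq => hC _ (htop q hq))
  obtain ⟨J1, E1⟩ := ovl3_fubini hm I1
  obtain ⟨J2, E2⟩ := ovl3_fubini hm I2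
  have step : ∫ p in Ω, φ p ^ 2 ≤
      2 * dO * (∫ q in R, φ (q.1, q.2, ζ q) ^ 2) + 4 * dO ^ 2 * ∫ p in Ω, pd3z φ p ^ 2 := by
    rw [E1, E2, ← integral_const_mul, ← integral_const_mul,
      ← integral_add (I4.const_mul _) (J2.const_mul _)]
    refine setIntegral_mono_on J1 ((I4.const_mul _).add (J2.const_mul _)) hR fun q hq => ?_
    obtain ⟨hpos, hle⟩ := hζb q (hRsub hq)
    have hseg : ∀ z ∈ Icc 0 (ζ q), (q.1, q.2, z) ∈ U := fun z hz =>
      hcU (segment_mem_closure hq hpos hz)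
    refine (segment_ineq hpos (g := fun z => φ (q.1, q.2, z))
      (g' := fun z => pd3z φ (q.1, q.2, z)) (fun z hz' => hz _ (hseg z hz'))
      (cz.comp (f := fun z : ℝ => (q.1, q.2, z)) (by fun_prop) hseg)).trans ?_
    have : 0 ≤ ∫ z in Ioo 0 (ζ q), pd3z φ (q.1, q.2, z) ^ 2 :=
      integral_nonneg fun _ => sq_nonneg _
    gcongr
  have hgrad : ∫ p in Ω, pd3z φ p ^ 2 ≤ ∫ p in Ω, gradSq3 φ p :=
    setIntegral_mono I2 I3 fun p => by
      simp only [gradSq3]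
      nlinarith [sq_nonneg (pd3x φ p), sq_nonneg (pd3y φ p)]
  have hG : 0 ≤ ∫ p in Ω, pd3z φ p ^ 2 := integral_nonneg fun _ => sq_nonneg _
  have hB : 0 ≤ ∫ q in R, φ (q.1, q.2, ζ q) ^ 2 := integral_nonneg fun _ => sq_nonneg _
  calc ∫ p in Ω, φ p ^ 2
      ≤ 2 * dO * (∫ q in R, φ (q.1, q.2, ζ q) ^ 2) + 4 * dO ^ 2 * ∫ p in Ω, pd3z φ p ^ 2 := step
    _ ≤ 4 * dO * (∫ q in R, φ (q.1, q.2, ζ q) ^ 2) + 4 * (dO * h) * ∫ p in Ω, gradSq3 φ p := by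
        have : dO ^ 2 ≤ dO * h := by nlinarith
        gcongr
        norm_num
    _ = _ := by
        field_simp
        ring
end

section
/- (Corollary 1(a) of the paper.) There exists a constant c > 0, depending only on x_M, such that for every h with 0 < h ≤ 1, every d_o with 0 < d_o ≤ h, every continuous ζ: [0, x_M] → ℝ with 0 < ζ(x) ≤ d_o, every bounded measurable f: Ω_o → ℝ, and every function φ that is C¹ on a neighborhood of the closure of Ω_o, one has | ∫_{Ω_o} f φ | ≤ c · d_o · (sup_{Ω_o} |f|) · ( ∫_{Ω_o} |∇φ|² + (1/h) ∫_0^{x_M} φ(x,ζ(x))² dx )^{1/2}. -/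
/-! Writing `φ(x,y) = φ(x,ζ(x)) - ∫_y^{ζ(x)} ∂_yφ` on each vertical segment and applying
Cauchy–Schwarz gives
`∫_0^{ζ(x)} φ² dy ≤ 2 d_o φ(x,ζ(x))² + 2 d_o² ∫_0^{ζ(x)} |∇φ|² dy` (`slice_bound`).
Integrating in `x` yields `∫_{Ω_o} φ² ≤ 2 d_o T + 2 d_o² G`, with `T` the trace integral and `G` the
Dirichlet integral. Since `|Ω_o| ≤ x_M d_o`, a second Cauchy–Schwarz gives
`(∫_{Ω_o} |f φ|)² ≤ M² x_M d_o (2 d_o T + 2 d_o² G) ≤ 2 x_M d_o² M² (G + T / h)`,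
using `d_o ≤ h ≤ 1`. Hence `c = √(2 x_M)` works. A function `ζ` that is continuous on `[0, x_M]` only is
replaced by its constant extension, which is continuous on `ℝ` and defines the same region. -/


open MeasureTheory Set

/-- Partial derivative of `φ : ℝ × ℝ → ℝ` with respect to the first variable. -/
noncomputable def pdx (φ : ℝ × ℝ → ℝ) (p : ℝ × ℝ) : ℝ :=
  deriv (fun t => φ (t, p.2)) p.1

/-- Squared Euclidean norm of the gradient of `φ : ℝ × ℝ → ℝ`. -/
noncomputable def gradSq (φ : ℝ × ℝ → ℝ) (p : ℝ × ℝ) : ℝ :=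
  (pdx φ p) ^ 2 + (pdy φ p) ^ 2

/-- Cauchy–Schwarz against the constant `1`. -/
lemma sq_integral_le {α : Type*} [MeasurableSpace α] (μ : Measure α) [IsFiniteMeasure μ]
    (g : α → ℝ) (hg : Integrable g μ) (hg2 : Integrable (fun a => g a ^ 2) μ) :
    (∫ a, g a ∂μ) ^ 2 ≤ μ.real univ * ∫ a, g a ^ 2 ∂μ := by
  -- Expand `0 ≤ ∫ (m g - I)²`, where `m` is the total mass and `I = ∫ g`.
  have key : ∀ m I : ℝ, ∫ a, (m * g a - I) ^ 2 ∂μ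
      = m ^ 2 * (∫ a, g a ^ 2 ∂μ) - 2 * m * I * (∫ a, g a ∂μ) + I ^ 2 * μ.real univ := by
    intro m I
    have e : (fun a => (m * g a - I) ^ 2)
        = fun a => (m ^ 2 * g a ^ 2 - 2 * m * I * g a) + I ^ 2 := by
      funext a; ring
    have hs : Integrable (fun a => m ^ 2 * g a ^ 2 - 2 * m * I * g a) μ :=
      (hg2.const_mul _).sub (hg.const_mul _)
    rw [e, integral_add hs (integrable_const _), integral_sub (hg2.const_mul _) (hg.const_mul _), integral_const_mul, integral_const_mul,
      integral_const, smul_eq_mul]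
    ring
  have h0 := integral_nonneg (μ := μ) (f := fun a => (μ.real univ * g a - ∫ a, g a ∂μ) ^ 2)
    (fun a => sq_nonneg _)
  rw [key] at h0
  have hm : 0 ≤ μ.real univ := measureReal_nonneg
  rcases hm.eq_or_lt with hm | hm
  · have : μ = 0 := by
      rw [← Measure.measure_univ_eq_zero]
      exact (measureReal_eq_zero_iff).1 hm.symm
    simp [this]
  · have : 0 ≤ μ.real univ * (μ.real univ * (∫ a, g a ^ 2 ∂μ) - (∫ a, g a ∂μ) ^ 2) := by
      nlinarith
    linarith [nonneg_of_mul_nonneg_right this hm]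

/-- One-dimensional Poincaré-type inequality with the trace at the upper end point. -/
lemma slice_bound (z d : ℝ) (hz : 0 < z) (hzd : z ≤ d) (ψ ψ' G : ℝ → ℝ)
    (hd : ∀ y ∈ Icc 0 z, HasDerivAt ψ (ψ' y) y) (hc : ContinuousOn ψ' (Icc 0 z))
    (hG : ContinuousOn G (Icc 0 z)) (hle : ∀ y ∈ Icc 0 z, ψ' y ^ 2 ≤ G y) :
    ∫ y in Ioo 0 z, ψ y ^ 2 ≤ 2 * d * ψ z ^ 2 + 2 * d ^ 2 * ∫ y in Ioo 0 z, G y := by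
  have hGi : IntegrableOn G (Ioo 0 z) :=
    (hG.integrableOn_compact isCompact_Icc).mono_set Ioo_subset_Icc_self
  have hG0 : 0 ≤ ∫ y in Ioo 0 z, G y := setIntegral_nonneg measurableSet_Ioo
    fun y hy => (sq_nonneg _).trans (hle y (Ioo_subset_Icc_self hy))
  have hψc : ContinuousOn ψ (Icc 0 z) := fun y hy => (hd y hy).continuousAt.continuousWithinAt
  have hψi : IntegrableOn (fun y => ψ y ^ 2) (Ioo 0 z) :=
    ((hψc.pow 2).integrableOn_compact isCompact_Icc).mono_set Ioo_subset_Icc_self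
  have hpt : ∀ y ∈ Ioo 0 z, ψ y ^ 2 ≤ 2 * ψ z ^ 2 + 2 * (z * ∫ y in Ioo 0 z, G y) := by
    intro y hy
    have hsub : Icc y z ⊆ Icc 0 z := Icc_subset_Icc_left hy.1.le
    have hsub' : Ioo y z ⊆ Ioo 0 z := Ioo_subset_Ioo_left hy.1.le
    have hftc : ∫ t in Ioo y z, ψ' t = ψ z - ψ y := by
      rw [← integral_Ioc_eq_integral_Ioo, ← intervalIntegral.integral_of_le hy.2.le]
      apply intervalIntegral.integral_eq_sub_of_hasDerivAt
      · intro t ht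
        rw [uIcc_of_le hy.2.le] at ht
        exact hd t (hsub ht)
      · apply ContinuousOn.intervalIntegrable
        rw [uIcc_of_le hy.2.le]
        exact hc.mono hsub
    have i1 : IntegrableOn ψ' (Ioo y z) :=
      ((hc.mono hsub).integrableOn_compact isCompact_Icc).mono_set Ioo_subset_Icc_self
    have i2 : IntegrableOn (fun t => ψ' t ^ 2) (Ioo y z) :=
      (((hc.mono hsub).pow 2).integrableOn_compact isCompact_Icc).mono_set Ioo_subset_Icc_self
    have cs := sq_integral_le (volume.restrict (Ioo y z)) ψ' i1 i2
    rw [hftc, measureReal_restrict_apply_univ, Real.volume_real_Ioo_of_le hy.2.le] at cs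
    have m1 : ∫ t in Ioo y z, ψ' t ^ 2 ≤ ∫ t in Ioo y z, G t :=
      setIntegral_mono_on i2 (hGi.mono_set hsub') measurableSet_Ioo
        fun t ht => hle t (hsub (Ioo_subset_Icc_self ht))
    have m2 : ∫ t in Ioo y z, G t ≤ ∫ t in Ioo 0 z, G t := by
      apply setIntegral_mono_set hGi _ (LE.le.eventuallyLE hsub')
      filter_upwards [ae_restrict_mem measurableSet_Ioo] with t ht
      exact (sq_nonneg _).trans (hle t (Ioo_subset_Icc_self ht))
    have m3 : (z - y) * ∫ t in Ioo y z, ψ' t ^ 2 ≤ z * ∫ t in Ioo 0 z, G t := by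
      apply mul_le_mul _ (m1.trans m2) (integral_nonneg fun t => sq_nonneg _) hz.le
      linarith [hy.1]
    nlinarith [sq_nonneg (2 * ψ z - ψ y)]
  have hI : ∫ y in Ioo 0 z, ψ y ^ 2
      ≤ ∫ y in Ioo 0 z, (2 * ψ z ^ 2 + 2 * (z * ∫ y in Ioo 0 z, G y)) :=
    setIntegral_mono_on hψi (integrable_const _) measurableSet_Ioo hpt
  rw [setIntegral_const, Real.volume_real_Ioo_of_le hz.le, smul_eq_mul, sub_zero] at hI
  have e1 : z * ψ z ^ 2 ≤ d * ψ z ^ 2 := by gcongr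
  have e2 : z ^ 2 * ∫ y in Ioo 0 z, G y ≤ d ^ 2 * ∫ y in Ioo 0 z, G y := by gcongr
  nlinarith

lemma measurableSet_ovl (xM : ℝ) (ζ : ℝ → ℝ) (hζ : Continuous ζ) : MeasurableSet (ovl xM ζ) := by
  apply IsOpen.measurableSet
  have : ovl xM ζ = {p : ℝ × ℝ | 0 < p.1} ∩ ({p | p.1 < xM} ∩ ({p | 0 < p.2} ∩
      {p | p.2 < ζ p.1})) := rfl
  rw [this]
  exact (isOpen_lt (by fun_prop) (by fun_prop)).inter
    ((isOpen_lt (by fun_prop) (by fun_prop)).inter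
    ((isOpen_lt (by fun_prop) (by fun_prop)).inter (isOpen_lt (by fun_prop) (by fun_prop))))

lemma slice_indicator (xM : ℝ) (ζ : ℝ → ℝ) (g : ℝ × ℝ → ℝ) (x : ℝ) :
    ∫ y, (ovl xM ζ).indicator g (x, y)
      = (Ioo 0 xM).indicator (fun x => ∫ y in Ioo 0 (ζ x), g (x, y)) x := by
  by_cases hx : x ∈ Ioo 0 xM
  · rw [indicator_of_mem hx, ← integral_indicator measurableSet_Ioo]
    congr 1
    funext y
    simp only [indicator, ovl, mem_ofPred_eq, mem_Ioo]
    simp [hx.1, hx.2]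
  · rw [indicator_of_notMem hx]
    have : ∀ y, (ovl xM ζ).indicator g (x, y) = 0 := fun y =>
      indicator_of_notMem (fun h => hx ⟨h.1, h.2.1⟩) _
    simp [this]

lemma fubini_ovl (xM : ℝ) (ζ : ℝ → ℝ) (hζ : Continuous ζ) (g : ℝ × ℝ → ℝ)
    (hg : IntegrableOn g (ovl xM ζ)) :
    IntegrableOn (fun x => ∫ y in Ioo 0 (ζ x), g (x, y)) (Ioo 0 xM) ∧
    ∫ p in ovl xM ζ, g p = ∫ x in Ioo 0 xM, ∫ y in Ioo 0 (ζ x), g (x, y) := by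
  have hm := measurableSet_ovl xM ζ hζ
  have hi : Integrable ((ovl xM ζ).indicator g) (volume.prod volume) :=
    (integrable_indicator_iff hm).2 hg
  constructor
  · rw [← integrable_indicator_iff measurableSet_Ioo]
    have := hi.integral_prod_left
    simpa only [slice_indicator] using this
  · rw [← integral_indicator hm, Measure.volume_eq_prod, integral_prod _ hi,
      ← integral_indicator measurableSet_Ioo]
    simp only [slice_indicator]

lemma hasDerivAt_slices (φ : ℝ × ℝ → ℝ) (p : ℝ × ℝ) (hφ : DifferentiableAt ℝ φ p) :
    HasDerivAt (fun t => φ (t, p.2)) (fderiv ℝ φ p (1, 0)) p.1 ∧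
    HasDerivAt (fun t => φ (p.1, t)) (fderiv ℝ φ p (0, 1)) p.2 := by
  constructor
  · exact HasFDerivAt.comp_hasDerivAt (f := fun t => (t, p.2)) p.1 hφ.hasFDerivAt
      ((hasDerivAt_id p.1).prodMk (hasDerivAt_const p.1 p.2))
  · exact HasFDerivAt.comp_hasDerivAt (f := fun t => (p.1, t)) p.2 hφ.hasFDerivAt
      ((hasDerivAt_const p.2 p.1).prodMk (hasDerivAt_id p.2))

/-- Closed vertical segments over interior abscissae lie in the closure of the region. -/
lemma slice_subset_closure (xM : ℝ) (ζ : ℝ → ℝ) (x : ℝ) (hx : x ∈ Ioo 0 xM) (hz : 0 < ζ x)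
    (y : ℝ) (hy : y ∈ Icc 0 (ζ x)) : (x, y) ∈ closure (ovl xM ζ) := by
  have hmaps : MapsTo (fun t : ℝ => (x, t)) (Ioo 0 (ζ x)) (ovl xM ζ) :=
    fun t ht => ⟨hx.1, hx.2, ht.1, ht.2⟩
  refine hmaps.closure (by fun_prop) ?_
  rwa [closure_Ioo hz.ne]

/-- The estimate for `ζ` continuous on all of `ℝ`, with the constant `√(2 x_M)`. -/
lemma overlap_bound (xM : ℝ) (hxM : 0 < xM) (h dO : ℝ) (hh : 0 < h) (hh1 : h ≤ 1)
    (hd : 0 < dO) (hdh : dO ≤ h) (ζ : ℝ → ℝ) (hζ : Continuous ζ)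
    (hb : ∀ x ∈ Ioo 0 xM, 0 < ζ x ∧ ζ x ≤ dO) (f : ℝ × ℝ → ℝ)
    (M : ℝ) (hM : 0 ≤ M) (hf : ∀ p ∈ ovl xM ζ, |f p| ≤ M)
    (U : Set (ℝ × ℝ)) (hU : IsOpen U) (hcl : closure (ovl xM ζ) ⊆ U)
    (φ : ℝ × ℝ → ℝ) (hφ : ContDiffOn ℝ 1 φ U) :
    |∫ p in ovl xM ζ, f p * φ p| ≤
      Real.sqrt (2 * xM) * dO * M * Real.sqrt ((∫ p in ovl xM ζ, gradSq φ p) +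
        (1 / h) * ∫ x in Ioo (0 : ℝ) xM, (φ (x, ζ x)) ^ 2) := by
  have hm := measurableSet_ovl xM ζ hζ
  have hsubbox : ovl xM ζ ⊆ Ioo 0 xM ×ˢ Ioo 0 dO := fun p hp =>
    ⟨⟨hp.1, hp.2.1⟩, hp.2.2.1, hp.2.2.2.trans_le (hb p.1 ⟨hp.1, hp.2.1⟩).2⟩
  have hcomp : IsCompact (closure (ovl xM ζ)) := by
    have hK : IsCompact (Icc 0 xM ×ˢ Icc 0 dO) := isCompact_Icc.prod isCompact_Icc
    refine hK.closure_of_subset (hsubbox.trans ?_)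
    exact prod_mono Ioo_subset_Icc_self Ioo_subset_Icc_self
  have hint : ∀ g : ℝ × ℝ → ℝ, ContinuousOn g U → IntegrableOn g (ovl xM ζ) := fun g hg =>
    ((hg.mono hcl).integrableOn_compact hcomp).mono_set subset_closure
  have hdiff : ∀ p ∈ U, DifferentiableAt ℝ φ p := fun p hp =>
    (hφ.differentiableOn one_ne_zero).differentiableAt (hU.mem_nhds hp)
  have hφc : ContinuousOn φ U := hφ.continuousOn
  have hfd : ContinuousOn (fderiv ℝ φ) U := hφ.continuousOn_fderiv_of_isOpen hU le_rfl
  have hx1 : ContinuousOn (fun p => fderiv ℝ φ p (1, 0)) U := hfd.clm_apply continuousOn_const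
  have hy1 : ContinuousOn (fun p => fderiv ℝ φ p (0, 1)) U := hfd.clm_apply continuousOn_const
  have hpx : ContinuousOn (pdx φ) U :=
    hx1.congr fun p hp => (hasDerivAt_slices φ p (hdiff p hp)).1.deriv
  have hpy : ContinuousOn (pdy φ) U :=
    hy1.congr fun p hp => (hasDerivAt_slices φ p (hdiff p hp)).2.deriv
  have hG : ContinuousOn (gradSq φ) U := (hpx.pow 2).add (hpy.pow 2)
  have hseg : ∀ x ∈ Ioo 0 xM, ∀ y ∈ Icc 0 (ζ x), (x, y) ∈ U := fun x hx y hy =>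
    hcl (slice_subset_closure xM ζ x hx (hb x hx).1 y hy)
  obtain ⟨F1, F2⟩ := fubini_ovl xM ζ hζ (fun p => φ p ^ 2) (hint _ (hφc.pow 2))
  obtain ⟨G1, G2⟩ := fubini_ovl xM ζ hζ (gradSq φ) (hint _ hG)
  have hTi : IntegrableOn (fun x => φ (x, ζ x) ^ 2) (Ioo 0 xM) := by
    have hmem : ∀ x ∈ Ioo 0 xM, (x, ζ x) ∈ closure (ovl xM ζ) := fun x hx =>
      slice_subset_closure xM ζ x hx (hb x hx).1 _ ⟨(hb x hx).1.le, le_rfl⟩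
    have hmem' : ∀ x ∈ Icc 0 xM, (x, ζ x) ∈ closure (ovl xM ζ) := by
      intro x hx
      rw [← closure_Ioo hxM.ne] at hx
      have hmt : MapsTo (fun t : ℝ => (t, ζ t)) (Ioo 0 xM) (closure (ovl xM ζ)) := hmem
      simpa using hmt.closure (by fun_prop) hx
    refine IntegrableOn.mono_set (ContinuousOn.integrableOn_compact isCompact_Icc ?_)
      Ioo_subset_Icc_self
    have : ContinuousOn (fun x : ℝ => (x, ζ x)) (Icc 0 xM) := by fun_prop
    exact (hφc.comp this fun x hx => hcl (hmem' x hx)).pow 2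
  have hA : ∫ p in ovl xM ζ, φ p ^ 2 ≤ 2 * dO * (∫ x in Ioo 0 xM, φ (x, ζ x) ^ 2)
      + 2 * dO ^ 2 * ∫ p in ovl xM ζ, gradSq φ p := by
    rw [F2, G2, ← integral_const_mul, ← integral_const_mul,
      ← integral_add (hTi.const_mul _) (G1.const_mul _)]
    refine setIntegral_mono_on F1 ((hTi.const_mul _).add (G1.const_mul _)) measurableSet_Ioo ?_
    intro x hx
    have hcx : ContinuousOn (fun y : ℝ => (x, y)) (Icc 0 (ζ x)) := by fun_prop
    refine slice_bound (ζ x) dO (hb x hx).1 (hb x hx).2 (fun y => φ (x, y))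
      (fun y => pdy φ (x, y)) (fun y => gradSq φ (x, y)) ?_ (hpy.comp hcx (hseg x hx))
      (hG.comp hcx (hseg x hx)) ?_
    · intro y hy
      exact (hasDerivAt_slices φ (x, y)
        (hdiff _ (hseg x hx y hy))).2.differentiableAt.hasDerivAt
    · intro y _
      simp only [gradSq]
      linarith [sq_nonneg (pdx φ (x, y))]
  set T := ∫ x in Ioo 0 xM, φ (x, ζ x) ^ 2 with hT
  set G := ∫ p in ovl xM ζ, gradSq φ p with hGdef
  have hT0 : 0 ≤ T := integral_nonneg fun x => sq_nonneg _
  have hG0 : 0 ≤ G := integral_nonneg fun p => add_nonneg (sq_nonneg _) (sq_nonneg _)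
  have hfin : volume (ovl xM ζ) ≠ ⊤ :=
    ((measure_mono subset_closure).trans_lt hcomp.measure_lt_top).ne
  have hbox : volume.real (Ioo 0 xM ×ˢ Ioo 0 dO) = xM * dO := by
    rw [Measure.volume_eq_prod, measureReal_prod_prod, Real.volume_real_Ioo_of_le hxM.le,
      Real.volume_real_Ioo_of_le hd.le, sub_zero, sub_zero]
  have hvol : volume.real (ovl xM ζ) ≤ xM * dO := by
    rw [← hbox]
    refine measureReal_mono hsubbox ?_
    rw [Measure.volume_eq_prod, Measure.prod_prod]
    simp [ENNReal.mul_eq_top]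
  have : IsFiniteMeasure (volume.restrict (ovl xM ζ)) := isFiniteMeasure_restrict.2 hfin
  have hcs := sq_integral_le (volume.restrict (ovl xM ζ)) (fun p => |φ p|) (hint _ hφc.abs)
    (by simp only [sq_abs]; exact hint _ (hφc.pow 2))
  simp only [sq_abs, measureReal_restrict_apply_univ] at hcs
  have hcs2 : (∫ p in ovl xM ζ, |φ p|) ^ 2 ≤ (2 * xM) * dO ^ 2 * (G + 1 / h * T) := by
    have hTh : T ≤ 1 / h * T := le_mul_of_one_le_left hT0 ((one_le_div hh).2 hh1)
    have hGd : dO * G ≤ G := mul_le_of_le_one_left hG0 (hdh.trans hh1)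
    calc _ ≤ (xM * dO) * (2 * dO * T + 2 * dO ^ 2 * G) :=
          hcs.trans (mul_le_mul hvol hA (integral_nonneg fun p => sq_nonneg _) (by positivity))
      _ = (2 * xM) * dO ^ 2 * (dO * G + T) := by ring
      _ ≤ _ := by gcongr
  have habs : |∫ p in ovl xM ζ, f p * φ p| ≤ M * ∫ p in ovl xM ζ, |φ p| := by
    rw [← integral_const_mul, ← Real.norm_eq_abs]
    refine norm_integral_le_of_norm_le ((hint _ hφc.abs).const_mul M) ?_
    filter_upwards [ae_restrict_mem hm] with p hp
    rw [Real.norm_eq_abs, abs_mul]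
    gcongr
    exact hf p hp
  have hsq := Real.le_sqrt_of_sq_le hcs2
  rw [Real.sqrt_mul (by positivity), Real.sqrt_mul (by positivity), Real.sqrt_sq hd.le] at hsq
  calc _ ≤ M * ∫ p in ovl xM ζ, |φ p| := habs
    _ ≤ M * (Real.sqrt (2 * xM) * dO * Real.sqrt (G + 1 / h * T)) := by gcongr
    _ = _ := by ring

/-- Corollary 1(a) of the paper. For every `x_M > 0` there is a
constant `c > 0`, depending only on `x_M`, such that
`|∫_{Ω_o} f φ| ≤ c d_o (sup_{Ω_o}|f|) ( ∫_{Ω_o} |∇φ|² + (1/h) ∫_0^{x_M} φ(x,ζ(x))² dx )^{1/2}`,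
where the supremum of `|f|` is expressed through any bound `M` with `|f| ≤ M` on `Ω_o`. -/
theorem corollary_f_phi_overlap (xM : ℝ) (hxM : 0 < xM) :
    ∃ c : ℝ, 0 < c ∧
      ∀ (h dO : ℝ), 0 < h → h ≤ 1 → 0 < dO → dO ≤ h →
      ∀ ζ : ℝ → ℝ, ContinuousOn ζ (Icc 0 xM) →
        (∀ x ∈ Icc 0 xM, 0 < ζ x ∧ ζ x ≤ dO) →
      ∀ f : ℝ × ℝ → ℝ, Measurable f →
      ∀ M : ℝ, 0 ≤ M → (∀ p ∈ ovl xM ζ, |f p| ≤ M) →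
      ∀ (U : Set (ℝ × ℝ)), IsOpen U → closure (ovl xM ζ) ⊆ U →
      ∀ φ : ℝ × ℝ → ℝ, ContDiffOn ℝ 1 φ U →
        |∫ p in ovl xM ζ, f p * φ p| ≤
          c * dO * M * Real.sqrt ((∫ p in ovl xM ζ, gradSq φ p) +
            (1 / h) * ∫ x in Ioo (0 : ℝ) xM, (φ (x, ζ x)) ^ 2) := by
  refine ⟨Real.sqrt (2 * xM), Real.sqrt_pos.2 (by positivity), ?_⟩
  intro h dO hh hh1 hd hdh ζ hζ hb f _ M hM hf U hU hcl φ hφ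
  -- The constant extension of `ζ` beyond `[0, xM]`.
  set ζ' : ℝ → ℝ := IccExtend hxM.le ((Icc 0 xM).domRestrict ζ) with hζ'
  have hc : Continuous ζ' := (continuousOn_iff_continuous_domRestrict.1 hζ).Icc_extend'
  have heq : ∀ x ∈ Ioo 0 xM, ζ' x = ζ x := fun x hx => by
    rw [hζ', IccExtend_of_mem _ _ (Ioo_subset_Icc_self hx)]
    rfl
  have hovl : ovl xM ζ = ovl xM ζ' := by
    ext p
    constructor
    · rintro ⟨h1, h2, h3, h4⟩
      exact ⟨h1, h2, h3, by rwa [heq _ ⟨h1, h2⟩]⟩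
    · rintro ⟨h1, h2, h3, h4⟩
      exact ⟨h1, h2, h3, by rwa [← heq _ ⟨h1, h2⟩]⟩
  have hT : ∫ x in Ioo (0 : ℝ) xM, (φ (x, ζ x)) ^ 2 = ∫ x in Ioo (0 : ℝ) xM, (φ (x, ζ' x)) ^ 2 :=
    setIntegral_congr_fun measurableSet_Ioo fun x hx => by simp only [heq x hx]
  rw [hovl] at hf hcl
  rw [hovl, hT]
  exact overlap_bound xM hxM h dO hh hh1 hd hdh ζ' hc
    (fun x hx => by rw [heq x hx]; exact hb x (Ioo_subset_Icc_self hx)) f M hM hf U hU hcl φ hφ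
end
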